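/- In the obstacle-problem setting, the discrete cluster Λ = {a ∈ cl(V) : w(a) > φ(a)} is connected: any two vertices of Λ are joined by a path in G all of whose vertices lie in Λ. -/

import Mathlib

/-!
Every vertex `a` of the cluster `Λ` is joined to `o` inside `Λ`, which suffices.

The solution `w` is itself admissible, an infimum of admissible functions being admissible
(`obstSol_admissible`). Let `C` be the component of `a` in `Λ` and suppose `o ∉ C`. Lower `w` to
the obstacle on `C`: put `v = φ` on `C` and `v = w` elsewhere. Then `v` is still admissible.
At a vertex of `C ∩ V` the function `v` agrees with `φ` there and at all neighbours (a neighbour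
outside `C` is not in `Λ`, so `w = φ` there), hence `Δv = Δφ = 0`. At a vertex of `V \ C` the value
is that of `w` and the neighbouring values are no larger, hence `Δv ≤ Δw`. Minimality of `w` gives
`w a ≤ v a = φ a`, contradicting `a ∈ Λ`.
-/


open Finset

/-- Degree-normalized graph Laplacian:
`Δu(a) = (1/deg a) * ∑_{b ∼ a} (u b - u a)`. -/
noncomputable def lap {V : Type*} (G : SimpleGraph V) [∀ v : V, Fintype (G.neighborSet v)]
    (u : V → ℝ) (a : V) : ℝ :=
  (1 / (G.degree a : ℝ)) * ∑ b ∈ G.neighborFinset a, (u b - u a)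

/-- Outer vertex boundary of a finite set of vertices: vertices not in `A`
adjacent to some vertex of `A`. -/
def bdry {V : Type*} [DecidableEq V] (G : SimpleGraph V) [∀ v : V, Fintype (G.neighborSet v)]
    (A : Finset V) : Finset V :=
  (A.biUnion fun a => G.neighborFinset a) \ A

/-- Closure `cl(A) = A ∪ ∂A` of a finite set of vertices. -/
def clo {V : Type*} [DecidableEq V] (G : SimpleGraph V) [∀ v : V, Fintype (G.neighborSet v)]
    (A : Finset V) : Finset V :=
  A ∪ bdry G A

/-- A function `u` is admissible for the discrete obstacle problem with threshold `r`
and obstacle `φ` on the vertex set `Vs` if `Δu ≤ r` on `Vs` and `u ≥ φ` on `cl(Vs)`. -/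
def Admissible {V : Type*} [DecidableEq V] (G : SimpleGraph V)
    [∀ v : V, Fintype (G.neighborSet v)]
    (Vs : Finset V) (r φ u : V → ℝ) : Prop :=
  (∀ a ∈ Vs, lap G u a ≤ r a) ∧ ∀ b ∈ clo G Vs, φ b ≤ u b

/-- The solution of the discrete obstacle problem: the pointwise infimum over all
admissible functions. -/
noncomputable def obstSol {V : Type*} [DecidableEq V] (G : SimpleGraph V)
    [∀ v : V, Fintype (G.neighborSet v)]
    (Vs : Finset V) (r φ : V → ℝ) (a : V) : ℝ :=
  sInf {x | ∃ u : V → ℝ, Admissible G Vs r φ u ∧ u a = x}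

section

variable {V : Type*} [DecidableEq V] {G : SimpleGraph V} [∀ v : V, Fintype (G.neighborSet v)]
  {Vs : Finset V} {r φ : V → ℝ}

lemma mem_clo_of_mem {a : V} (ha : a ∈ Vs) : a ∈ clo G Vs :=
  Finset.mem_union_left _ ha

lemma mem_clo_of_adj {a b : V} (ha : a ∈ Vs) (hab : G.Adj a b) : b ∈ clo G Vs := by
  by_cases hb : b ∈ Vs
  · exact mem_clo_of_mem hb
  · simp only [clo, bdry, Finset.mem_union, Finset.mem_sdiff, Finset.mem_biUnion,
      SimpleGraph.mem_neighborFinset]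
    exact Or.inr ⟨⟨a, ha, hab⟩, hb⟩

/-- Monotonicity of the Laplacian, with a slack `ε` in the comparison of increments. The case
`deg a = 0`, where `lap` vanishes, is why `ε ≥ 0` is assumed. -/
lemma lap_le_lap_add {u v : V → ℝ} {a : V} {ε : ℝ} (hε : 0 ≤ ε)
    (h : ∀ b, G.Adj a b → u b - u a ≤ v b - v a + ε) : lap G u a ≤ lap G v a + ε := by
  unfold lap
  have h1 : ∑ b ∈ G.neighborFinset a, (u b - u a)
      ≤ ∑ b ∈ G.neighborFinset a, (v b - v a) + G.degree a * ε := by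
    calc _ ≤ ∑ b ∈ G.neighborFinset a, (v b - v a + ε) :=
          Finset.sum_le_sum fun b hb => h b ((G.mem_neighborFinset a b).1 hb)
      _ = _ := by simp [Finset.sum_add_distrib]
  have h2 : (1 / (G.degree a : ℝ)) * (G.degree a * ε) ≤ ε := by
    rcases eq_or_ne (G.degree a : ℝ) 0 with h0 | h0
    · simpa [h0] using hε
    · exact le_of_eq (by field_simp)
  have h3 := mul_le_mul_of_nonneg_left h1 (by positivity : 0 ≤ 1 / (G.degree a : ℝ))
  rw [mul_add] at h3
  linarith

lemma obstSol_le {u : V → ℝ} (hu : Admissible G Vs r φ u) {a : V} (ha : a ∈ clo G Vs) :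
    obstSol G Vs r φ a ≤ u a :=
  csInf_le ⟨φ a, by rintro x ⟨u, hu, rfl⟩; exact hu.2 a ha⟩ ⟨u, hu, rfl⟩

lemma zero_admissible (hr : ∀ a ∈ Vs, 0 < r a) (hφ0 : ∀ b ∈ clo G Vs, φ b ≤ 0) :
    Admissible G Vs r φ (fun _ => 0) :=
  ⟨fun a ha => by simpa [lap] using (hr a ha).le, hφ0⟩

lemma obstSol_admissible (hr : ∀ a ∈ Vs, 0 < r a) (hφ0 : ∀ b ∈ clo G Vs, φ b ≤ 0) :
    Admissible G Vs r φ (obstSol G Vs r φ) := by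
  have hne : ∀ a, {x | ∃ u : V → ℝ, Admissible G Vs r φ u ∧ u a = x}.Nonempty :=
    fun a => ⟨0, _, zero_admissible hr hφ0, rfl⟩
  refine ⟨fun a ha => le_of_forall_pos_le_add fun ε hε => ?_, fun b hb => ?_⟩
  · -- Compare with an admissible `u` that is within `ε` of the infimum at `a`.
    obtain ⟨_, ⟨u, hu, rfl⟩, hlt⟩ := Real.lt_sInf_add_pos (hne a) hε
    have hlt' : u a < obstSol G Vs r φ a + ε := hlt
    refine (lap_le_lap_add (v := u) hε.le fun b hb => ?_).trans
      (add_le_add_left (hu.1 a ha) ε)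
    have := obstSol_le hu (mem_clo_of_adj ha hb)
    linarith
  · exact le_csInf (hne b) (by rintro x ⟨u, hu, rfl⟩; exact hu.2 b hb)

lemma exists_walk_to_source (hr : ∀ a ∈ Vs, 0 < r a) (hφ0 : ∀ b ∈ clo G Vs, φ b ≤ 0)
    {o : V} (hφlap : ∀ a ∈ Vs, a ≠ o → lap G φ a = 0)
    {a : V} (ha : a ∈ clo G Vs) (haw : φ a < obstSol G Vs r φ a) :
    ∃ p : G.Walk a o, ∀ c ∈ p.support, c ∈ clo G Vs ∧ φ c < obstSol G Vs r φ c := by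
  classical
  by_contra hno
  set w := obstSol G Vs r φ with hw
  have hwadm : Admissible G Vs r φ w := obstSol_admissible hr hφ0
  -- The component of `a` in the cluster.
  let C : V → Prop := fun c => ∃ p : G.Walk a c, ∀ x ∈ p.support, x ∈ clo G Vs ∧ φ x < w x
  have hCa : C a := ⟨SimpleGraph.Walk.nil, by simpa using ⟨ha, haw⟩⟩
  have hCstep : ∀ c d, C c → G.Adj c d → d ∈ clo G Vs → φ d < w d → C d := by
    rintro c d ⟨p, hp⟩ hcd hd hdw
    refine ⟨p.concat hcd, fun x hx => ?_⟩
    rw [SimpleGraph.Walk.support_concat, List.mem_append, List.mem_singleton] at hx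
    rcases hx with hx | rfl
    · exact hp x hx
    · exact ⟨hd, hdw⟩
  let v : V → ℝ := fun c => if C c then φ c else w c
  have hvC : ∀ c, C c → v c = φ c := fun c hc => if_pos hc
  have hvN : ∀ c, ¬ C c → v c = w c := fun c hc => if_neg hc
  have hvadm : Admissible G Vs r φ v := by
    refine ⟨fun c hc => ?_, fun c hc => ?_⟩
    · by_cases hCc : C c
      · have hle : lap G v c ≤ lap G φ c + 0 := by
          refine lap_le_lap_add le_rfl fun d hd => ?_
          by_cases hCd : C d
          · rw [hvC c hCc, hvC d hCd, add_zero]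
          · have hnot : ¬ φ d < w d := fun h =>
              hCd (hCstep c d hCc hd (mem_clo_of_adj hc hd) h)
            rw [hvC c hCc, hvN d hCd]
            linarith
        have hco : c ≠ o := by
          rintro rfl
          exact hno hCc
        rw [hφlap c hc hco] at hle
        linarith [hr c hc]
      · have hle : lap G v c ≤ lap G w c + 0 := by
          refine lap_le_lap_add le_rfl fun d hd => ?_
          rw [hvN c hCc]
          by_cases hCd : C d
          · rw [hvC d hCd]
            linarith [hwadm.2 d (mem_clo_of_adj hc hd)]
          · rw [hvN d hCd, add_zero]
        linarith [hwadm.1 c hc]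
    · by_cases hCc : C c
      · exact (hvC c hCc).ge
      · rw [hvN c hCc]
        exact hwadm.2 c hc
  have hwa : w a ≤ v a := obstSol_le hvadm ha
  rw [hvC a hCa] at hwa
  exact absurd haw (not_lt.2 hwa)

end

/-- **Connectedness of the discrete cluster (Lemma A.3, second part).**
In the obstacle-problem setting, the discrete cluster
`Λ = {a ∈ cl(V) : w(a) > φ(a)}` is connected: any two of its vertices are joined by a
walk in `G` all of whose vertices lie in `Λ`. -/
theorem obstacle_cluster_connected {V : Type*} [DecidableEq V] [Infinite V]
    (G : SimpleGraph V) [∀ v : V, Fintype (G.neighborSet v)]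
    (hG : G.Connected)
    (Vs : Finset V) (hVne : Vs.Nonempty)
    (hVconn : (G.induce (Vs : Set V)).Connected)
    (o : V) (ho : o ∈ Vs)
    (r : V → ℝ) (hr : ∀ a ∈ Vs, 0 < r a)
    (t : ℝ) (ht : 0 < t)
    (φ : V → ℝ)
    (hφ0 : ∀ b ∈ clo G Vs, φ b ≤ 0)
    (hφlap : ∀ a ∈ Vs, lap G φ a = if a = o then t else 0)
    (hφbd : ∀ b ∈ bdry G Vs, φ b = 0) :
    ∀ a b : V, a ∈ clo G Vs → φ a < obstSol G Vs r φ a →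
      b ∈ clo G Vs → φ b < obstSol G Vs r φ b →
      ∃ p : G.Walk a b, ∀ c ∈ p.support,
        c ∈ clo G Vs ∧ φ c < obstSol G Vs r φ c := by
  intro a b ha haw hb hbw
  have hφlap' : ∀ c ∈ Vs, c ≠ o → lap G φ c = 0 := fun c hc hco => by
    rw [hφlap c hc, if_neg hco]
  obtain ⟨p, hp⟩ := exists_walk_to_source hr hφ0 hφlap' ha haw
  obtain ⟨q, hq⟩ := exists_walk_to_source hr hφ0 hφlap' hb hbw
  refine ⟨p.append q.reverse, fun c hc => ?_⟩
  rw [SimpleGraph.Walk.mem_support_append_iff, SimpleGraph.Walk.support_reverse,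
    List.mem_reverse] at hc
  exact hc.elim (hp c) (hq c)
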